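/- arXiv:2502.21062 — 3 statements merged into one kernel-verified Lean document; each statement's English description precedes it below -/
import Mathlib

section
/- For every density matrix R ∈ 𝔇_δ one has −tr(Δ_δ R) ≤ (2/ħ²)·(E_δ[R] + √(2π)/(4ħ)). -/
/-! Diagonalise `-Δ_δ` by the discrete Fourier matrix: its eigenvalues are
`m_k = N² (2 - 2 cos (2πk/N))`. The claim rearranges to the lower bound
`-√(2π)/(4ħ) ≤ Σ λ_i log λ_i - (ħ²/2) tr(Δ_δ R)`.

By the Gibbs variational principle (`gibbs_bound`) this follows from
`Σ_k exp(-(ħ²/2) m_k) ≤ exp(√(2π)/(4ħ))`. To prove the principle, let `P_{ik}` be the squared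
moduli of the coordinates of the eigenvectors of `R` in the Fourier basis. They form a doubly
stochastic matrix with `-tr(Δ_δ R) = Σ λ_i m_k P_{ik}`, so the tangent-line inequality
`λ log λ ≥ λ log y + λ - y`, with `y = exp(-(ħ²/2) m_k - c)`, can be averaged against `P`.

For the partition function, represent `k` by the integer `|k| ≤ N/2`. Jordan's inequality
`sin x ≥ 2x/π` gives `m_k = 4N² sin²(πk/N) ≥ 16k²`, and comparison with a Gaussian integral gives
`Σ_k exp(-8ħ²k²) ≤ 1 + 2 ∫_0^∞ exp(-8ħ²x²) dx = 1 + √(2π)/(4ħ)`. -/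

open Matrix
open scoped ComplexOrder Real

/-- The discrete Laplacian `Δ_δ` on the discrete torus `ℤ/Nℤ`, with `δ = 1/N`,
as a complex `N×N` matrix: `(Δ_δ f)_j = (f_{j+1} + f_{j-1} - 2 f_j)/δ²`. -/
noncomputable def discreteLaplacian (N : ℕ) [NeZero N] : Matrix (ZMod N) (ZMod N) ℂ :=
  Matrix.of fun j k =>
    (((if k = j + 1 then 1 else 0) + (if k = j - 1 then 1 else 0)
      - (if k = j then 2 else 0) : ℂ)) * (N : ℂ) ^ 2

/-- The free energy `E_δ[R] = Σ_i λ_i log λ_i − ħ² tr(Δ_δ R)`. -/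
noncomputable def freeEnergy (N : ℕ) [NeZero N] (hbar : ℝ)
    (R : Matrix (ZMod N) (ZMod N) ℂ) : ℝ :=
  letI := Classical.propDecidable
  if h : R.IsHermitian then
    (∑ i, (h.eigenvalues i * Real.log (h.eigenvalues i)))
      - hbar ^ 2 * ((discreteLaplacian N * R).trace).re
  else 0

/-- The tangent-line inequality for `x ↦ x log x` at the point `exp (-s)`. -/
lemma tangent_mul_log {x : ℝ} (hx : 0 ≤ x) (s : ℝ) :
    x - Real.exp (-s) ≤ x * Real.log x + x * s := by
  rcases hx.eq_or_lt with rfl | hx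
  · simp [Real.exp_nonneg]
  · have h := Real.log_le_sub_one_of_pos (div_pos (Real.exp_pos (-s)) hx)
    rw [Real.log_div (Real.exp_pos _).ne' hx.ne', Real.log_exp] at h
    have h2 := mul_le_mul_of_nonneg_left h hx.le
    have h3 : x * (Real.exp (-s) / x - 1) = Real.exp (-s) - x := by field_simp
    linarith

/-- The Gibbs variational principle for a Hamiltonian `L = F diag(m) F*` with `F` unitary: a bound
`exp c` on the partition function at inverse temperature `b` bounds the free energy below by
`-c`. -/
lemma gibbs_bound {n : Type*} [Fintype n] [DecidableEq n] (R L F : Matrix n n ℂ)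
    (hR : R.PosSemidef) (htr : R.trace = 1) (m : n → ℝ) (hF : Fᴴ * F = 1)
    (hL : L = F * diagonal (fun k => (m k : ℂ)) * Fᴴ) (b c : ℝ)
    (hZ : ∑ k, Real.exp (-(b * m k)) ≤ Real.exp c) :
    0 ≤ ∑ i, hR.1.eigenvalues i * Real.log (hR.1.eigenvalues i) + b * (L * R).trace.re + c := by
  set l := hR.1.eigenvalues with hl
  set U : Matrix n n ℂ := (hR.1.eigenvectorUnitary : Matrix n n ℂ) with hU
  have hU1 : Uᴴ * U = 1 := Unitary.coe_star_mul_self hR.1.eigenvectorUnitary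
  have hU2 : U * Uᴴ = 1 := Unitary.coe_mul_star_self hR.1.eigenvectorUnitary
  have hF2 : F * Fᴴ = 1 := mul_eq_one_comm.mp hF
  have hRU : R = U * diagonal (fun i => (l i : ℂ)) * Uᴴ := by
    have := hR.1.spectral_theorem
    rw [Unitary.conjStarAlgAut_apply] at this
    exact this
  set W : Matrix n n ℂ := Uᴴ * F with hW
  have hW1 : Wᴴ * W = 1 := by
    rw [hW, conjTranspose_mul, conjTranspose_conjTranspose, Matrix.mul_assoc,
      ← Matrix.mul_assoc U, hU2, Matrix.one_mul, hF]
  have hW2 : W * Wᴴ = 1 := mul_eq_one_comm.mp hW1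
  set P : n → n → ℝ := fun i k => Complex.normSq (W i k) with hP
  have hP0 : ∀ i k, 0 ≤ P i k := fun i k => Complex.normSq_nonneg _
  have hrow : ∀ i, ∑ k, P i k = 1 := by
    intro i
    have := congrFun (congrFun hW2 i) i
    simp only [mul_apply, conjTranspose_apply, one_apply_eq, RCLike.star_def,
      Complex.mul_conj] at this
    exact_mod_cast this
  have hcol : ∀ k, ∑ i, P i k = 1 := by
    intro k
    have := congrFun (congrFun hW1 k) k
    simp only [mul_apply, conjTranspose_apply, one_apply_eq, RCLike.star_def,
      mul_comm _ (W _ k), Complex.mul_conj] at this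
    exact_mod_cast this
  have hl1 : ∑ i, l i = 1 := by
    have := hR.1.trace_eq_sum_eigenvalues
    rw [htr] at this
    have h2 : ((∑ i, l i : ℝ) : ℂ) = 1 := by
      rw [this]; push_cast; rfl
    exact_mod_cast h2
  have htrace : (L * R).trace.re = ∑ i, ∑ k, l i * m k * P i k := by
    have h1 : (L * R).trace
        = (diagonal (fun i => (l i : ℂ)) * (W * (diagonal (fun k => (m k : ℂ)) * Wᴴ))).trace := by
      rw [hL, hRU, trace_mul_comm, hW, conjTranspose_mul, conjTranspose_conjTranspose]
      simp only [Matrix.mul_assoc]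
      rw [trace_mul_comm]
      simp only [Matrix.mul_assoc]
    have h2 : (L * R).trace = ((∑ i, ∑ k, l i * m k * P i k : ℝ) : ℂ) := by
      rw [h1, trace]
      push_cast
      refine Finset.sum_congr rfl fun i _ => ?_
      rw [diag_apply, diagonal_mul, mul_apply, Finset.mul_sum]
      refine Finset.sum_congr rfl fun k _ => ?_
      rw [diagonal_mul, conjTranspose_apply, RCLike.star_def, hP]
      simp only [← Complex.mul_conj]
      ring
    rw [h2, Complex.ofReal_re]
  have hkey : ∑ i, ∑ k, P i k * (l i - Real.exp (-(b * m k + c)))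
      ≤ ∑ i, ∑ k, P i k * (l i * Real.log (l i) + l i * (b * m k + c)) :=
    Finset.sum_le_sum fun i _ => Finset.sum_le_sum fun k _ =>
      mul_le_mul_of_nonneg_left (tangent_mul_log (hR.eigenvalues_nonneg i) _) (hP0 i k)
  have hleft : ∑ i, ∑ k, P i k * (l i - Real.exp (-(b * m k + c)))
      = 1 - ∑ k, Real.exp (-(b * m k + c)) := by
    simp only [mul_sub, Finset.sum_sub_distrib]
    congr 1
    · simp only [← Finset.sum_mul, hrow, one_mul, hl1]
    · rw [Finset.sum_comm]
      simp only [← Finset.sum_mul, hcol, one_mul]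
  have hright : ∑ i, ∑ k, P i k * (l i * Real.log (l i) + l i * (b * m k + c))
      = ∑ i, l i * Real.log (l i) + b * (L * R).trace.re + c := by
    rw [htrace]
    have : ∀ i, ∑ k, P i k * (l i * Real.log (l i) + l i * (b * m k + c))
        = l i * Real.log (l i) + b * (∑ k, l i * m k * P i k) + c * l i := by
      intro i
      calc _ = ∑ k, (P i k * (l i * Real.log (l i) + c * l i) + b * (l i * m k * P i k)) :=
            Finset.sum_congr rfl fun k _ => by ring
        _ = _ := by
            rw [Finset.sum_add_distrib, ← Finset.sum_mul, hrow, ← Finset.mul_sum]; ring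
    simp only [this, Finset.sum_add_distrib, ← Finset.mul_sum, hl1, mul_one]
  have hZ' : ∑ k, Real.exp (-(b * m k + c)) ≤ 1 := by
    calc _ = (∑ k, Real.exp (-(b * m k))) * Real.exp (-c) := by
          rw [Finset.sum_mul]
          refine Finset.sum_congr rfl fun k _ => ?_
          rw [← Real.exp_add]; ring_nf
      _ ≤ Real.exp c * Real.exp (-c) := by gcongr
      _ = 1 := by rw [← Real.exp_add]; simp
  linarith

/-- The eigenvalue of `-Δ_δ` at the Fourier mode `k`. -/
noncomputable def modeEnergy (N : ℕ) [NeZero N] (k : ZMod N) : ℝ :=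
  (N : ℝ) ^ 2 * (2 - 2 * (ZMod.stdAddChar k : ℂ).re)

/-- The unitary discrete Fourier matrix `F_{jk} = e^{2πijk/N} / √N`. -/
noncomputable def fourierMatrix (N : ℕ) [NeZero N] : Matrix (ZMod N) (ZMod N) ℂ :=
  Matrix.of fun j k => (ZMod.stdAddChar (j * k) : ℂ) * ((√(N : ℝ))⁻¹ : ℝ)

lemma fourierMatrix_unitary (N : ℕ) [NeZero N] :
    (fourierMatrix N)ᴴ * fourierMatrix N = 1 := by
  ext j k
  have hN : (N : ℝ) ≠ 0 := Nat.cast_ne_zero.mpr (NeZero.ne N)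
  have hs : (((√(N : ℝ))⁻¹ : ℝ) : ℂ) * ((√(N : ℝ))⁻¹ : ℝ) = (N : ℂ)⁻¹ := by
    rw [← Complex.ofReal_mul, ← mul_inv, Real.mul_self_sqrt (Nat.cast_nonneg N)]
    simp
  rw [mul_apply]
  have : ∀ x : ZMod N, (fourierMatrix N)ᴴ j x * fourierMatrix N x k
      = (ZMod.stdAddChar (x * (k - j)) : ℂ) * (N : ℂ)⁻¹ := by
    intro x
    rw [← hs, conjTranspose_apply, fourierMatrix, of_apply, of_apply, star_mul', RCLike.star_def,
      ← AddChar.map_neg_eq_conj, Complex.conj_ofReal,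
      show x * (k - j) = -(x * j) + x * k by ring, AddChar.map_add_eq_mul]
    ring
  rw [Finset.sum_congr rfl fun x _ => this x, ← Finset.sum_mul,
    AddChar.sum_mulShift _ (ZMod.isPrimitive_stdAddChar N), one_apply]
  have hN' : (N : ℂ) ≠ 0 := Nat.cast_ne_zero.mpr (NeZero.ne N)
  by_cases h : j = k
  · simp [h, ZMod.card, hN']
  · simp [h, sub_eq_zero, Ne.symm h]

lemma laplacian_diagonalization (N : ℕ) [NeZero N] :
    -discreteLaplacian N = fourierMatrix N * diagonal (fun k => (modeEnergy N k : ℂ))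
      * (fourierMatrix N)ᴴ := by
  have hF2 : fourierMatrix N * (fourierMatrix N)ᴴ = 1 :=
    mul_eq_one_comm.mp (fourierMatrix_unitary N)
  have h : -discreteLaplacian N * fourierMatrix N
      = fourierMatrix N * diagonal (fun k => (modeEnergy N k : ℂ)) := by
    ext j k
    have hre : ((2 * (ZMod.stdAddChar k : ℂ).re : ℝ) : ℂ)
        = ZMod.stdAddChar k + ZMod.stdAddChar (-k) := by
      rw [AddChar.map_neg_eq_conj, Complex.add_conj]
    rw [mul_diagonal, Matrix.neg_mul, neg_apply, mul_apply]
    simp only [discreteLaplacian, fourierMatrix, of_apply, add_mul, sub_mul, ite_mul, one_mul,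
      zero_mul, Finset.sum_add_distrib, Finset.sum_sub_distrib, Finset.sum_ite_eq',
      Finset.mem_univ, if_true]
    rw [modeEnergy, Complex.ofReal_mul, Complex.ofReal_sub, hre, sub_eq_add_neg (j * k) k,
      AddChar.map_add_eq_mul, AddChar.map_add_eq_mul]
    push_cast
    ring
  rw [← h, Matrix.mul_assoc, hF2, Matrix.mul_one]

lemma modeEnergy_ge (N : ℕ) [NeZero N] (k : ZMod N) :
    16 * (k.valMinAbs : ℝ) ^ 2 ≤ modeEnergy N k := by
  have hN : (0 : ℝ) < N := Nat.cast_pos.mpr (NeZero.pos N)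
  set j := k.valMinAbs with hj
  have hre : (ZMod.stdAddChar k : ℂ).re = Real.cos (2 * (π * j / N)) := by
    conv_lhs => rw [← k.coe_valMinAbs, ZMod.stdAddChar_coe]
    rw [show (2 * π * Complex.I * (k.valMinAbs : ℤ) / N : ℂ)
      = ((2 * (π * j / N) : ℝ) : ℂ) * Complex.I by push_cast; ring, Complex.exp_ofReal_mul_I_re]
  have hjN : |(j : ℝ)| ≤ N / 2 := by
    have h1 := k.natAbs_valMinAbs_le
    have h2 : 2 * j.natAbs ≤ N := by omega
    have h3 : (2 * (j.natAbs : ℝ)) ≤ N := by exact_mod_cast h2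
    rw [Nat.cast_natAbs, Int.cast_abs] at h3
    linarith
  have hsin : 2 * |(j : ℝ)| / N ≤ |Real.sin (π * j / N)| := by
    have h1 : |Real.sin (π * j / N)| = |Real.sin (π * |(j : ℝ)| / N)| := by
      rcases abs_choice (j : ℝ) with h | h <;> rw [h]
      rw [mul_neg, neg_div, Real.sin_neg, abs_neg]
    rw [h1]
    refine le_trans ?_ (le_abs_self _)
    have h2 := Real.mul_le_sin (x := π * |(j : ℝ)| / N) (by positivity) (by
      rw [div_le_iff₀ hN]
      nlinarith [Real.pi_pos])
    refine le_trans (le_of_eq ?_) h2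
    field_simp
  have hsq : 4 * (j : ℝ) ^ 2 ≤ N ^ 2 * Real.sin (π * j / N) ^ 2 := by
    rw [div_le_iff₀ hN] at hsin
    have := pow_le_pow_left₀ (by positivity) hsin 2
    rw [mul_pow, mul_pow, sq_abs, sq_abs] at this
    linarith
  rw [modeEnergy, hre, Real.cos_two_mul, Real.cos_sq']
  linarith

/-- Comparison of a symmetric Gaussian sum with the Gaussian integral. -/
lemma gaussian_sum_le {a : ℝ} (ha : 0 < a) (n : ℕ) :
    ∑ j ∈ Finset.Icc (-(n : ℤ)) n, Real.exp (-a * (j : ℝ) ^ 2) ≤ 1 + √(π / a) := by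
  have hsplit : ∀ n : ℕ, ∑ j ∈ Finset.Icc (-(n : ℤ)) n, Real.exp (-a * (j : ℝ) ^ 2)
      = 1 + 2 * ∑ i ∈ Finset.range n, Real.exp (-a * (0 + ((i + 1 : ℕ) : ℝ)) ^ 2) := by
    intro n
    induction n with
    | zero => simp
    | succ n ih =>
      have : Finset.Icc (-((n + 1 : ℕ) : ℤ)) ((n + 1 : ℕ) : ℤ)
          = insert (-((n + 1 : ℕ) : ℤ)) (insert ((n + 1 : ℕ) : ℤ) (Finset.Icc (-(n : ℤ)) n)) := by
        ext x
        simp only [Finset.mem_Icc, Finset.mem_insert]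
        omega
      rw [this, Finset.sum_insert (by simp only [Finset.mem_Icc, Finset.mem_insert]; omega),
        Finset.sum_insert (by simp only [Finset.mem_Icc]; omega), ih, Finset.sum_range_succ]
      push_cast
      ring_nf
  have hanti : AntitoneOn (fun x : ℝ => Real.exp (-a * x ^ 2)) (Set.Icc 0 (0 + n)) := by
    intro x hx y _ hxy
    have := pow_le_pow_left₀ hx.1 hxy 2
    exact Real.exp_le_exp.mpr (by nlinarith)
  have h1 := hanti.sum_le_integral
  have h2 : ∫ x in (0 : ℝ)..0 + n, Real.exp (-a * x ^ 2) ≤ √(π / a) / 2 := by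
    rw [← integral_gaussian_Ioi, intervalIntegral.integral_of_le (by simp)]
    exact MeasureTheory.setIntegral_mono_set (integrable_exp_neg_mul_sq ha).integrableOn
      (.of_forall fun _ => Real.exp_nonneg _) Set.Ioc_subset_Ioi_self.eventuallyLE
  rw [hsplit]
  linarith

lemma partition_function_le (N : ℕ) [NeZero N] {hbar : ℝ} (hhbar : 0 < hbar) :
    ∑ k, Real.exp (-(hbar ^ 2 / 2 * modeEnergy N k))
      ≤ Real.exp (√(2 * π) / (4 * hbar)) := by
  have ha : 0 < 8 * hbar ^ 2 := by positivity
  have hconst : √(π / (8 * hbar ^ 2)) = √(2 * π) / (4 * hbar) := by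
    rw [show π / (8 * hbar ^ 2) = (2 * π) / (4 * hbar) ^ 2 by field_simp; norm_num,
      Real.sqrt_div (by positivity), Real.sqrt_sq (by positivity)]
  calc ∑ k, Real.exp (-(hbar ^ 2 / 2 * modeEnergy N k))
      ≤ ∑ k : ZMod N, Real.exp (-(8 * hbar ^ 2) * (k.valMinAbs : ℝ) ^ 2) := by
        refine Finset.sum_le_sum fun k _ => Real.exp_le_exp.mpr ?_
        nlinarith [modeEnergy_ge N k, sq_nonneg hbar]
    _ = ∑ j ∈ Finset.univ.image (ZMod.valMinAbs : ZMod N → ℤ),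
          Real.exp (-(8 * hbar ^ 2) * (j : ℝ) ^ 2) :=
        (Finset.sum_image (f := fun j : ℤ => Real.exp (-(8 * hbar ^ 2) * (j : ℝ) ^ 2))
          ZMod.injective_valMinAbs.injOn).symm
    _ ≤ ∑ j ∈ Finset.Icc (-(N : ℤ)) N, Real.exp (-(8 * hbar ^ 2) * (j : ℝ) ^ 2) := by
        refine Finset.sum_le_sum_of_subset_of_nonneg ?_ fun _ _ _ => Real.exp_nonneg _
        intro j hj
        obtain ⟨k, -, rfl⟩ := Finset.mem_image.mp hj
        have := k.natAbs_valMinAbs_le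
        rw [Finset.mem_Icc]
        omega
    _ ≤ 1 + √(π / (8 * hbar ^ 2)) := gaussian_sum_le ha N
    _ ≤ _ := by
        rw [hconst]
        linarith [Real.add_one_le_exp (√(2 * π) / (4 * hbar))]

/-- For every density matrix `R ∈ 𝔇_δ`:
`−tr(Δ_δ R) ≤ (2/ħ²)(E_δ[R] + √(2π)/(4ħ))`. -/
theorem neg_trace_laplacian_le (N : ℕ) (hN : 2 ≤ N) [NeZero N]
    (hbar : ℝ) (hhbar : 0 < hbar)
    (R : Matrix (ZMod N) (ZMod N) ℂ) (hR : R.PosSemidef) (htr : R.trace = 1) :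
    -((discreteLaplacian N * R).trace).re
      ≤ (2 / hbar ^ 2) * (freeEnergy N hbar R + Real.sqrt (2 * π) / (4 * hbar)) := by
  have h := gibbs_bound R (-discreteLaplacian N) (fourierMatrix N) hR htr (modeEnergy N)
    (fourierMatrix_unitary N) (laplacian_diagonalization N) (hbar ^ 2 / 2) _
    (partition_function_le N hhbar)
  rw [Matrix.neg_mul, trace_neg, Complex.neg_re] at h
  -- `freeEnergy` uses classical decidability of equality, so the two families of eigenvalues
  -- agree only up to the choice of `DecidableEq` instance.
  have hE : freeEnergy N hbar R = ∑ i, hR.1.eigenvalues i * Real.log (hR.1.eigenvalues i)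
      - hbar ^ 2 * ((discreteLaplacian N * R).trace).re := by
    rw [freeEnergy, dif_pos hR.1]
    congr!
  rw [hE, div_mul_eq_mul_div, le_div_iff₀ (by positivity)]
  linarith
end

section
/- For every C_A > 0 there exists a constant K_G > 0, depending only on C_A and ħ, with the following property: for every integrable 1-periodic function A : ℝ → ℝ with ∫₀¹ |A(z)| dz ≤ C_A there exists exactly one bounded continuous function G : (0,1] × (ℝ/ℤ) × (ℝ/ℤ) → ℝ satisfying the fixed point relation G^t(x,y) = ∫₀ᵗ ∫₀¹ 𝔎^{t−s}(x − z) A(z) (G^s(z,y) + 𝔎^s(z − y)) dz ds for all x, y ∈ ℝ/ℤ and all t ∈ (0,1]; moreover this G satisfies sup_{t ∈ (0,1]} sup_{x,y} |G^t(x,y)| ≤ K_G. -/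
/-!
The fixed point relation is a linear Volterra equation in time with a weakly singular kernel.

Poisson summation (`Real.tsum_exp_neg_mul_int_sq`) gives `|𝔎^t(z)| ≤ C t ^ (-1/2)` on `(0,1]`
(`exists_heatKernel_bound`). Hence the operator
`V g = ∫₀ᵗ ∫₀¹ 𝔎^{t−s}(x−z) A(z) g^s(z,y) dz ds` is well defined on continuous `g` with
`|g^s| ≤ M s ^ (-1/2)`, a class that contains both bounded functions and `𝔎^s(z−y)`. After the
substitution `s = t u` the integrand is dominated, uniformly in `(t,x,y)`, by a multiple of
`(u ^ (-1/2) + (1-u) ^ (-1/2)) |A(z)|`, and the extra factor `t` exactly cancels the two powers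
`t ^ (-1/2)`. Dominated convergence then shows that `V g` is continuous (`continuousOn_volterra`),
and it is bounded by a multiple of `M ∫ |A|` (`abs_volterra_le`).

For `|g^s| ≤ M exp (lam s)` one has `|V g| ≤ 4 C CA lam ^ (-1/4) M exp (lam t)`
(`abs_volterra_le_exp`), by `exp (-w) ≤ w ^ (-1/4)` and `∫₀¹ v ^ (-3/4) dv = 4`. So for `lam` large,
depending on `C` and `CA` only, `G ↦ V (G + 𝔎)` is a `1/2`-contraction for the weighted supremum
norm `sup exp (-lam t) |G^t|`, and Banach's theorem on bounded continuous functions on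
`(0,1] × ℝ × ℝ` provides existence and uniqueness. The bound on `G` is twice the bound on `V 𝔎`,
times `exp lam`. Periodicity in `x` is inherited from the heat kernel; periodicity in `y` follows
from uniqueness, since translating a fixed point by `1` in `y` gives a fixed point.
-/

open MeasureTheory intervalIntegral
open scoped Real

/-- The 1-periodic heat kernel `𝔎^t(z) = Σ_{k∈ℤ} exp(−4π²k²ħ²t) e^{2πikz}`
(a real-valued function, written via cosines). -/
noncomputable def heatKernel (hbar t z : ℝ) : ℝ :=
  ∑' k : ℤ, Real.exp (-(4 * π ^ 2 * (k : ℝ) ^ 2 * hbar ^ 2 * t))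
    * Real.cos (2 * π * (k : ℝ) * z)

/-- The defining properties of the auxiliary kernel `G` for a potential `A`:
a bounded continuous function on `(0,1] × (ℝ/ℤ) × (ℝ/ℤ)` satisfying the fixed point relation
`G^t(x,y) = ∫₀ᵗ ∫₀¹ 𝔎^{t−s}(x−z) A(z) (G^s(z,y) + 𝔎^s(z−y)) dz ds`. -/
def IsAuxKernel (hbar : ℝ) (A : ℝ → ℝ) (G : ℝ → ℝ → ℝ → ℝ) : Prop :=
  (∀ t x y, G t (x + 1) y = G t x y ∧ G t x (y + 1) = G t x y) ∧
  ContinuousOn (fun p : ℝ × ℝ × ℝ => G p.1 p.2.1 p.2.2)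
    (Set.Ioc 0 1 ×ˢ (Set.univ : Set ℝ) ×ˢ (Set.univ : Set ℝ)) ∧
  (∃ B : ℝ, ∀ t ∈ Set.Ioc (0 : ℝ) 1, ∀ x y : ℝ, |G t x y| ≤ B) ∧
  (∀ t ∈ Set.Ioc (0 : ℝ) 1, ∀ x y : ℝ,
    G t x y = ∫ s in (0 : ℝ)..t, ∫ z in (0 : ℝ)..1,
      heatKernel hbar (t - s) (x - z) * A z * (G s z y + heatKernel hbar s (z - y)))

/-! ### The heat kernel -/

theorem summable_exp_neg_mul_int_sq {c : ℝ} (hc : 0 < c) :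
    Summable fun k : ℤ => Real.exp (-(c * (k : ℝ) ^ 2)) := by
  have hτ : 0 < ((c / π : ℝ) * Complex.I : ℂ).im := by
    simp only [Complex.im_ofReal_mul, Complex.I_im, mul_one]; positivity
  have h := (hasSum_jacobiTheta₂_term 0 hτ).summable.norm
  refine h.congr fun k => ?_
  rw [norm_jacobiTheta₂_term]
  congr 1
  simp only [Complex.im_ofReal_mul, Complex.I_im, Complex.zero_im]
  field_simp
  ring

/-- The heat kernel is the real part of Jacobi's theta function on the imaginary axis. -/
theorem heatKernel_eq_re_jacobiTheta₂ {hbar t : ℝ} (hhbar : 0 < hbar) (ht : 0 < t) (z : ℝ) :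
    heatKernel hbar t z
      = (jacobiTheta₂ (z : ℂ) ((4 * π * hbar ^ 2 * t : ℝ) * Complex.I)).re := by
  have hτ : 0 < ((4 * π * hbar ^ 2 * t : ℝ) * Complex.I : ℂ).im := by
    simp only [Complex.im_ofReal_mul, Complex.I_im, mul_one]; positivity
  have h := Complex.hasSum_re (hasSum_jacobiTheta₂_term (z : ℂ) hτ)
  rw [← h.tsum_eq, heatKernel]
  refine tsum_congr fun k => ?_
  have e : 2 * (π : ℂ) * Complex.I * (k : ℂ) * (z : ℂ)
      + π * Complex.I * (k : ℂ) ^ 2 * ((4 * π * hbar ^ 2 * t : ℝ) * Complex.I)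
      = ((-(4 * π ^ 2 * (k : ℝ) ^ 2 * hbar ^ 2 * t) : ℝ) : ℂ)
        + ((2 * π * k * z : ℝ) : ℂ) * Complex.I := by
    push_cast
    linear_combination (4 * (π : ℂ) ^ 2 * k ^ 2 * hbar ^ 2 * t) * Complex.I_sq
  rw [jacobiTheta₂_term, e, Complex.exp_re]
  simp only [Complex.add_re, Complex.add_im, Complex.ofReal_re, Complex.ofReal_im,
    Complex.re_ofReal_mul, Complex.im_ofReal_mul, Complex.I_re, Complex.I_im, mul_zero, mul_one,
    add_zero, zero_add]

theorem continuousAt_heatKernel {hbar t : ℝ} (hhbar : 0 < hbar) (ht : 0 < t) (z : ℝ) :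
    ContinuousAt (fun p : ℝ × ℝ => heatKernel hbar p.1 p.2) (t, z) := by
  have hτ : 0 < ((4 * π * hbar ^ 2 * t : ℝ) * Complex.I : ℂ).im := by
    simp only [Complex.im_ofReal_mul, Complex.I_im, mul_one]; positivity
  have hθ := continuousAt_jacobiTheta₂ (z : ℂ) hτ
  have hm : ContinuousAt (fun p : ℝ × ℝ =>
      ((p.2 : ℂ), ((4 * π * hbar ^ 2 * p.1 : ℝ) * Complex.I : ℂ))) (t, z) := by
    apply Continuous.continuousAt
    fun_prop
  have hc := Complex.continuous_re.continuousAt.comp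
    (ContinuousAt.comp (f := fun p : ℝ × ℝ =>
      ((p.2 : ℂ), ((4 * π * hbar ^ 2 * p.1 : ℝ) * Complex.I : ℂ))) hθ hm)
  refine hc.congr ?_
  filter_upwards [(continuous_fst.isOpen_preimage _ isOpen_Ioi).mem_nhds
    (show (t, z) ∈ Prod.fst ⁻¹' Set.Ioi (0 : ℝ) from ht)] with p hp
  exact (heatKernel_eq_re_jacobiTheta₂ hhbar hp p.2).symm

theorem heatKernel_add_one (hbar t z : ℝ) : heatKernel hbar t (z + 1) = heatKernel hbar t z := by
  refine tsum_congr fun k => ?_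
  rw [show 2 * π * (k : ℝ) * (z + 1) = 2 * π * k * z + k * (2 * π) by ring,
    Real.cos_add_int_mul_two_pi]

theorem heatKernel_sub_one (hbar t z : ℝ) : heatKernel hbar t (z - 1) = heatKernel hbar t z := by
  rw [← heatKernel_add_one hbar t (z - 1), sub_add_cancel]

/-- The kernel blows up at most like `t ^ (-1/2)`: Poisson summation turns its value at
`z = 0` into `(4πħ²t) ^ (-1/2)` times a Gaussian sum that increases with `t`. -/
theorem exists_heatKernel_bound {hbar : ℝ} (hhbar : 0 < hbar) :
    ∃ C : ℝ, 0 < C ∧ ∀ t ∈ Set.Ioc (0 : ℝ) 1, ∀ z : ℝ,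
      |heatKernel hbar t z| ≤ C * t ^ (-1 / 2 : ℝ) := by
  set b : ℝ := 4 * π * hbar ^ 2 with hb
  have hb0 : 0 < b := by positivity
  have hS := summable_exp_neg_mul_int_sq (c := π / b) (by positivity)
  refine ⟨b ^ (-1 / 2 : ℝ) * ∑' k : ℤ, Real.exp (-(π / b * (k : ℝ) ^ 2)), ?_, ?_⟩
  · exact mul_pos (by positivity) (hS.tsum_pos (fun _ => (Real.exp_pos _).le) 0 (Real.exp_pos _))
  · rintro t ⟨ht0, ht1⟩ z
    have hbt : 0 < b * t := by positivity
    have hs1 := summable_exp_neg_mul_int_sq (c := π * (b * t)) (by positivity)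
    have hs2 := summable_exp_neg_mul_int_sq (c := π / (b * t)) (by positivity)
    have hle : ∀ k : ℤ, |Real.exp (-(4 * π ^ 2 * (k : ℝ) ^ 2 * hbar ^ 2 * t))
        * Real.cos (2 * π * (k : ℝ) * z)| ≤ Real.exp (-(π * (b * t) * (k : ℝ) ^ 2)) := by
      intro k
      rw [abs_mul, abs_of_pos (Real.exp_pos _)]
      refine (mul_le_of_le_one_right (Real.exp_pos _).le (Real.abs_cos_le_one _)).trans_eq ?_
      rw [hb]; ring_nf
    calc |heatKernel hbar t z| ≤ ∑' k : ℤ, Real.exp (-(π * (b * t) * (k : ℝ) ^ 2)) :=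
          tsum_of_norm_bounded (f := fun k : ℤ => Real.exp (-(4 * π ^ 2 * (k : ℝ) ^ 2 * hbar ^ 2 * t))
            * Real.cos (2 * π * (k : ℝ) * z)) hs1.hasSum hle
      _ = (b * t) ^ (-1 / 2 : ℝ) * ∑' k : ℤ, Real.exp (-(π / (b * t) * (k : ℝ) ^ 2)) := by
          have h := Real.tsum_exp_neg_mul_int_sq hbt
          simp only [← neg_mul] at *
          rw [← neg_div]
          rw [h, neg_div 2 1, Real.rpow_neg hbt.le, one_div]
      _ ≤ (b * t) ^ (-1 / 2 : ℝ) * ∑' k : ℤ, Real.exp (-(π / b * (k : ℝ) ^ 2)) := by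
          refine mul_le_mul_of_nonneg_left (hs2.tsum_le_tsum (fun k => ?_) hS) (by positivity)
          gcongr
          exact mul_le_of_le_one_right hb0.le ht1
      _ = _ := by rw [Real.mul_rpow hb0.le ht0.le]; ring

/-! ### The Volterra operator -/

/-- The unit square of pairs (rescaled time, space) carrying Lebesgue measure. -/
noncomputable def unitSq : Measure (ℝ × ℝ) :=
  (volume.restrict (Set.Ioo (0 : ℝ) 1)).prod (volume.restrict (Set.Ioc (0 : ℝ) 1))

/-- The Volterra operator `g ↦ ∫₀ᵗ ∫₀¹ 𝔎^{t−s}(x−z) A(z) g^s(z,y) dz ds`, after the substitution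
`s = t u`, which places the singularities in time at the fixed points `u = 0` and `u = 1`. -/
noncomputable def volterra (hbar : ℝ) (A : ℝ → ℝ) (g : ℝ → ℝ → ℝ → ℝ) (t x y : ℝ) : ℝ :=
  ∫ q, t * (heatKernel hbar (t * (1 - q.1)) (x - q.2) * g (t * q.1) q.2 y) * A q.2 ∂unitSq

/-- Admissible sources: continuous functions on `(0,1] × ℝ × ℝ` growing at most like `M s ^ (-1/2)` as `s → 0`. -/
def IsSource (M : ℝ) (g : ℝ → ℝ → ℝ → ℝ) : Prop :=
  ContinuousOn (fun p : ℝ × ℝ × ℝ => g p.1 p.2.1 p.2.2)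
    (Set.Ioc 0 1 ×ˢ (Set.univ : Set ℝ) ×ˢ (Set.univ : Set ℝ)) ∧
  ∀ s ∈ Set.Ioc (0 : ℝ) 1, ∀ z y : ℝ, |g s z y| ≤ M * s ^ (-1 / 2 : ℝ)

theorem mul_mem_Ioc {t u : ℝ} (ht : t ∈ Set.Ioc (0 : ℝ) 1) (hu : u ∈ Set.Ioo (0 : ℝ) 1) :
    t * u ∈ Set.Ioc (0 : ℝ) 1 :=
  ⟨mul_pos ht.1 hu.1, mul_le_one₀ ht.2 hu.1.le hu.2.le⟩

theorem one_sub_mem_Ioo {u : ℝ} (hu : u ∈ Set.Ioo (0 : ℝ) 1) : 1 - u ∈ Set.Ioo (0 : ℝ) 1 :=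
  ⟨by linarith [hu.2], by linarith [hu.1]⟩

theorem integrableOn_rpow_Ioo {r : ℝ} (hr : -1 < r) :
    IntegrableOn (fun u : ℝ => u ^ r) (Set.Ioo 0 1) := by
  have h := (intervalIntegral.intervalIntegrable_rpow' (a := 0) (b := 1) hr)
  rw [intervalIntegrable_iff_integrableOn_Ioo_of_le zero_le_one] at h
  exact h

theorem integrableOn_one_sub_rpow_Ioo {r : ℝ} (hr : -1 < r) :
    IntegrableOn (fun u : ℝ => (1 - u) ^ r) (Set.Ioo 0 1) := by
  have h := ((intervalIntegral.intervalIntegrable_rpow' (a := 0) (b := 1) hr).comp_sub_left 1)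
  rw [sub_zero, sub_self] at h
  have h := h.symm
  rw [intervalIntegrable_iff_integrableOn_Ioo_of_le zero_le_one] at h
  exact h

theorem integral_one_sub_rpow_Ioo :
    ∫ u in Set.Ioo (0 : ℝ) 1, (1 - u) ^ (-3 / 4 : ℝ) = 4 := by
  rw [← integral_Ioc_eq_integral_Ioo, ← intervalIntegral.integral_of_le zero_le_one,
    intervalIntegral.integral_comp_sub_left (fun u : ℝ => u ^ (-3 / 4 : ℝ)) 1,
    integral_rpow (Or.inl (by norm_num))]
  norm_num

theorem ae_unitSq : ∀ᵐ q ∂unitSq, q.1 ∈ Set.Ioo (0 : ℝ) 1 := by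
  rw [unitSq, Measure.prod_restrict]
  filter_upwards [ae_restrict_mem (measurableSet_Ioo.prod measurableSet_Ioc)] with q hq
  exact hq.1

/-- The elementary estimate behind the convergence of the time integral:
`(u(1-u)) ^ (-1/2) ≤ u ^ (-1/2) + (1-u) ^ (-1/2)`. -/
theorem rpow_mul_rpow_le {u : ℝ} (hu : u ∈ Set.Ioo (0 : ℝ) 1) :
    (1 - u) ^ (-1 / 2 : ℝ) * u ^ (-1 / 2 : ℝ)
      ≤ u ^ (-1 / 2 : ℝ) + (1 - u) ^ (-1 / 2 : ℝ) := by
  have hv := one_sub_mem_Ioo hu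
  have ha : 0 < u ^ (-1 / 2 : ℝ) := Real.rpow_pos_of_pos hu.1 _
  have hb : 0 < (1 - u) ^ (-1 / 2 : ℝ) := Real.rpow_pos_of_pos hv.1 _
  have sq : ∀ w : ℝ, 0 < w → (w ^ (-1 / 2 : ℝ)) ^ 2 = w⁻¹ := fun w hw => by
    rw [← Real.rpow_natCast, ← Real.rpow_mul hw.le]; norm_num [Real.rpow_neg_one]
  have h1 := sq u hu.1
  have h2 := sq (1 - u) hv.1
  refine (le_abs_self _).trans (abs_le_of_sq_le_sq ?_ (by positivity))
  have hn := hu.1.ne'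
  have hm := hv.1.ne'
  have : ((1 - u) ^ (-1 / 2 : ℝ)) ^ 2 * (u ^ (-1 / 2 : ℝ)) ^ 2
      = (u ^ (-1 / 2 : ℝ)) ^ 2 + ((1 - u) ^ (-1 / 2 : ℝ)) ^ 2 := by
    rw [h1, h2]; field_simp; ring
  nlinarith [mul_pos ha hb]

/-- Joint continuity in `((t, x, y), (u, z))` of the Volterra integrand without the factor `A`. -/
theorem continuousOn_integrand {hbar M : ℝ} (hhbar : 0 < hbar) {g : ℝ → ℝ → ℝ → ℝ}
    (hg : IsSource M g) :
    ContinuousOn (fun r : (ℝ × ℝ × ℝ) × (ℝ × ℝ) =>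
      r.1.1 * (heatKernel hbar (r.1.1 * (1 - r.2.1)) (r.1.2.1 - r.2.2)
        * g (r.1.1 * r.2.1) r.2.2 r.1.2.2))
      ((Set.Ioc 0 1 ×ˢ (Set.univ : Set ℝ) ×ˢ (Set.univ : Set ℝ))
        ×ˢ (Set.Ioo 0 1 ×ˢ (Set.univ : Set ℝ))) := by
  refine ContinuousOn.mul (by fun_prop) (ContinuousOn.mul ?_ ?_)
  · rintro r ⟨⟨ht, -⟩, hu, -⟩
    have h := continuousAt_heatKernel hhbar (mul_pos ht.1 (one_sub_mem_Ioo hu).1) (r.1.2.1 - r.2.2)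
    have hm : ContinuousAt (fun r : (ℝ × ℝ × ℝ) × (ℝ × ℝ) =>
        (r.1.1 * (1 - r.2.1), r.1.2.1 - r.2.2)) r := by
      apply Continuous.continuousAt
      fun_prop
    exact (ContinuousAt.comp (f := fun r : (ℝ × ℝ × ℝ) × (ℝ × ℝ) =>
        (r.1.1 * (1 - r.2.1), r.1.2.1 - r.2.2)) h hm).continuousWithinAt
  · refine hg.1.comp (f := fun r : (ℝ × ℝ × ℝ) × (ℝ × ℝ) =>
      (r.1.1 * r.2.1, r.2.2, r.1.2.2)) (by fun_prop) ?_
    rintro r ⟨⟨ht, -⟩, hu, -⟩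
    exact ⟨mul_mem_Ioc ht hu, trivial, trivial⟩

theorem aestronglyMeasurable_integrand {hbar M : ℝ} (hhbar : 0 < hbar) {A : ℝ → ℝ}
    (hA : IntegrableOn A (Set.Ioc 0 1)) {g : ℝ → ℝ → ℝ → ℝ} (hg : IsSource M g)
    {t : ℝ} (ht : t ∈ Set.Ioc (0 : ℝ) 1) (x y : ℝ) :
    AEStronglyMeasurable (fun q : ℝ × ℝ =>
      t * (heatKernel hbar (t * (1 - q.1)) (x - q.2) * g (t * q.1) q.2 y) * A q.2) unitSq := by
  refine AEStronglyMeasurable.mul ?_ (hA.aestronglyMeasurable.comp_snd)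
  rw [unitSq, Measure.prod_restrict]
  refine ContinuousOn.aestronglyMeasurable ?_ (measurableSet_Ioo.prod measurableSet_Ioc)
  refine (continuousOn_integrand hhbar hg).comp (f := fun q : ℝ × ℝ => ((t, x, y), q))
    (by fun_prop) ?_
  rintro q ⟨hu, -⟩
  exact ⟨⟨ht, trivial, trivial⟩, hu, trivial⟩

/-- A majorant for the Volterra integrand that does not depend on `t`, `x`, `y`. -/
theorem abs_integrand_le {hbar C M : ℝ} (hC : ∀ t ∈ Set.Ioc (0 : ℝ) 1, ∀ z : ℝ,
      |heatKernel hbar t z| ≤ C * t ^ (-1 / 2 : ℝ)) (hC0 : 0 < C) (hM : 0 ≤ M) {A : ℝ → ℝ}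
    {g : ℝ → ℝ → ℝ → ℝ} (hg : IsSource M g) {t : ℝ} (ht : t ∈ Set.Ioc (0 : ℝ) 1) (x y : ℝ)
    {q : ℝ × ℝ} (hq : q.1 ∈ Set.Ioo (0 : ℝ) 1) :
    ‖t * (heatKernel hbar (t * (1 - q.1)) (x - q.2) * g (t * q.1) q.2 y) * A q.2‖
      ≤ (C * M * (q.1 ^ (-1 / 2 : ℝ) + (1 - q.1) ^ (-1 / 2 : ℝ))) * |A q.2| := by
  have h1 := hC _ (mul_mem_Ioc ht (one_sub_mem_Ioo hq)) (x - q.2)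
  have h2 := hg.2 _ (mul_mem_Ioc ht hq) q.2 y
  rw [Real.mul_rpow ht.1.le (one_sub_mem_Ioo hq).1.le] at h1
  rw [Real.mul_rpow ht.1.le hq.1.le] at h2
  have htt : t * (t ^ (-1 / 2 : ℝ) * t ^ (-1 / 2 : ℝ)) = 1 := by
    rw [← Real.rpow_add ht.1]
    norm_num [Real.rpow_neg_one, ht.1.ne']
  rw [Real.norm_eq_abs, abs_mul, abs_mul, abs_mul, abs_of_pos ht.1]
  refine mul_le_mul_of_nonneg_right ?_ (abs_nonneg _)
  have hpos : 0 < t := ht.1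
  have hv := (one_sub_mem_Ioo hq).1
  calc t * (|heatKernel hbar (t * (1 - q.1)) (x - q.2)| * |g (t * q.1) q.2 y|)
      ≤ t * ((C * (t ^ (-1 / 2 : ℝ) * (1 - q.1) ^ (-1 / 2 : ℝ)))
          * (M * (t ^ (-1 / 2 : ℝ) * q.1 ^ (-1 / 2 : ℝ)))) := by
        gcongr
    _ = (t * (t ^ (-1 / 2 : ℝ) * t ^ (-1 / 2 : ℝ)))
          * (C * M * ((1 - q.1) ^ (-1 / 2 : ℝ) * q.1 ^ (-1 / 2 : ℝ))) := by ring
    _ ≤ _ := by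
        rw [htt, one_mul]
        exact mul_le_mul_of_nonneg_left (rpow_mul_rpow_le hq) (by positivity)

theorem integrable_majorant (c : ℝ) {A : ℝ → ℝ} (hA : IntegrableOn A (Set.Ioc 0 1)) :
    Integrable (fun q : ℝ × ℝ =>
      (c * (q.1 ^ (-1 / 2 : ℝ) + (1 - q.1) ^ (-1 / 2 : ℝ))) * |A q.2|) unitSq :=
  Integrable.mul_prod (f := fun u : ℝ => c * (u ^ (-1 / 2 : ℝ) + (1 - u) ^ (-1 / 2 : ℝ)))
    (g := fun z => |A z|)
    (((integrableOn_rpow_Ioo (by norm_num)).add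
      (integrableOn_one_sub_rpow_Ioo (by norm_num))).const_mul c) hA.abs

theorem integrable_integrand {hbar C M : ℝ} (hhbar : 0 < hbar)
    (hC : ∀ t ∈ Set.Ioc (0 : ℝ) 1, ∀ z : ℝ,
      |heatKernel hbar t z| ≤ C * t ^ (-1 / 2 : ℝ)) (hC0 : 0 < C) (hM : 0 ≤ M) {A : ℝ → ℝ}
    (hA : IntegrableOn A (Set.Ioc 0 1))
    {g : ℝ → ℝ → ℝ → ℝ} (hg : IsSource M g) {t : ℝ} (ht : t ∈ Set.Ioc (0 : ℝ) 1) (x y : ℝ) :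
    Integrable (fun q : ℝ × ℝ =>
      t * (heatKernel hbar (t * (1 - q.1)) (x - q.2) * g (t * q.1) q.2 y) * A q.2) unitSq := by
  refine (integrable_majorant (C * M) hA).mono'
    (aestronglyMeasurable_integrand hhbar hA hg ht x y) ?_
  filter_upwards [ae_unitSq] with q hq
  exact abs_integrand_le hC hC0 hM hg ht x y hq

theorem continuousOn_volterra {hbar C M : ℝ} (hhbar : 0 < hbar)
    (hC : ∀ t ∈ Set.Ioc (0 : ℝ) 1, ∀ z : ℝ,
      |heatKernel hbar t z| ≤ C * t ^ (-1 / 2 : ℝ)) (hC0 : 0 < C) (hM : 0 ≤ M) {A : ℝ → ℝ}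
    (hA : IntegrableOn A (Set.Ioc 0 1)) {g : ℝ → ℝ → ℝ → ℝ} (hg : IsSource M g) :
    ContinuousOn (fun p : ℝ × ℝ × ℝ => volterra hbar A g p.1 p.2.1 p.2.2)
      (Set.Ioc 0 1 ×ˢ (Set.univ : Set ℝ) ×ˢ (Set.univ : Set ℝ)) := by
  refine continuousOn_of_dominated
    (fun p hp => aestronglyMeasurable_integrand hhbar hA hg hp.1 p.2.1 p.2.2) (fun p hp => ?_)
    (integrable_majorant (C * M) hA) ?_
  · filter_upwards [ae_unitSq] with q hq
    exact abs_integrand_le hC hC0 hM hg hp.1 _ _ hq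
  · filter_upwards [ae_unitSq] with q hq
    refine ContinuousOn.mul ?_ continuousOn_const
    refine (continuousOn_integrand hhbar hg).comp (f := fun p : ℝ × ℝ × ℝ => (p, q))
      (by fun_prop) ?_
    exact fun p hp => ⟨hp, hq, trivial⟩

theorem abs_volterra_le {hbar C M CA : ℝ}
    (hC : ∀ t ∈ Set.Ioc (0 : ℝ) 1, ∀ z : ℝ,
      |heatKernel hbar t z| ≤ C * t ^ (-1 / 2 : ℝ)) (hC0 : 0 < C) (hM : 0 ≤ M) {A : ℝ → ℝ}
    (hA : IntegrableOn A (Set.Ioc 0 1)) (hCA : (∫ z in Set.Ioc (0 : ℝ) 1, |A z|) ≤ CA)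
    {g : ℝ → ℝ → ℝ → ℝ} (hg : IsSource M g) {t : ℝ} (ht : t ∈ Set.Ioc (0 : ℝ) 1) (x y : ℝ) :
    |volterra hbar A g t x y|
      ≤ (C * M * ∫ u in Set.Ioo (0 : ℝ) 1, (u ^ (-1 / 2 : ℝ) + (1 - u) ^ (-1 / 2 : ℝ))) * CA := by
  have h := norm_integral_le_of_norm_le (integrable_majorant (C * M) hA)
    (f := fun q : ℝ × ℝ =>
      t * (heatKernel hbar (t * (1 - q.1)) (x - q.2) * g (t * q.1) q.2 y) * A q.2) (by
    filter_upwards [ae_unitSq] with q hq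
    exact abs_integrand_le hC hC0 hM hg ht x y hq)
  rw [unitSq, integral_prod_mul
    (fun u : ℝ => C * M * (u ^ (-1 / 2 : ℝ) + (1 - u) ^ (-1 / 2 : ℝ))) (fun z => |A z|),
    MeasureTheory.integral_const_mul] at h
  refine h.trans (mul_le_mul_of_nonneg_left hCA (mul_nonneg (by positivity) ?_))
  refine setIntegral_nonneg measurableSet_Ioo fun u hu => ?_
  have h1 := hu.1
  have h2 := (one_sub_mem_Ioo hu).1
  positivity

/-- Decay of the exponential: `exp (-w) ≤ w ^ (-1/4)`. -/
theorem exp_neg_le_rpow {w : ℝ} (hw : 0 < w) : Real.exp (-w) ≤ w ^ (-1 / 4 : ℝ) := by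
  rw [Real.rpow_def_of_pos hw]
  refine Real.exp_le_exp.2 ?_
  have := Real.log_le_sub_one_of_pos hw
  linarith

/-- Exponentially weighted estimate: measured with the weight `exp (-lam t)`, the Volterra operator
has norm at most `4 C CA lam ^ (-1/4)`, which is small for large `lam`. -/
theorem abs_volterra_le_exp {hbar C M CA lam : ℝ}
    (hC : ∀ t ∈ Set.Ioc (0 : ℝ) 1, ∀ z : ℝ,
      |heatKernel hbar t z| ≤ C * t ^ (-1 / 2 : ℝ)) (hC0 : 0 < C) (hM : 0 ≤ M) (hlam : 0 < lam)
    {A : ℝ → ℝ}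
    (hA : IntegrableOn A (Set.Ioc 0 1)) (hCA : (∫ z in Set.Ioc (0 : ℝ) 1, |A z|) ≤ CA)
    {g : ℝ → ℝ → ℝ → ℝ}
    (hg : ∀ s ∈ Set.Ioc (0 : ℝ) 1, ∀ z y : ℝ, |g s z y| ≤ M * Real.exp (lam * s))
    {t : ℝ} (ht : t ∈ Set.Ioc (0 : ℝ) 1) (x y : ℝ) :
    |volterra hbar A g t x y|
      ≤ Real.exp (lam * t) * (4 * C * CA * lam ^ (-1 / 4 : ℝ)) * M := by
  have hmaj : Integrable (fun q : ℝ × ℝ =>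
      (Real.exp (lam * t) * C * M * lam ^ (-1 / 4 : ℝ) * (1 - q.1) ^ (-3 / 4 : ℝ)) * |A q.2|)
      unitSq :=
    Integrable.mul_prod
      (f := fun u : ℝ => Real.exp (lam * t) * C * M * lam ^ (-1 / 4 : ℝ) * (1 - u) ^ (-3 / 4 : ℝ))
      (g := fun z => |A z|)
      ((integrableOn_one_sub_rpow_Ioo (by norm_num)).const_mul _) hA.abs
  have h := norm_integral_le_of_norm_le hmaj
    (f := fun q : ℝ × ℝ =>
      t * (heatKernel hbar (t * (1 - q.1)) (x - q.2) * g (t * q.1) q.2 y) * A q.2) (by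
    filter_upwards [ae_unitSq] with q hq
    have h1 := hC _ (mul_mem_Ioc ht (one_sub_mem_Ioo hq)) (x - q.2)
    have h2 := hg _ (mul_mem_Ioc ht hq) q.2 y
    have hv := (one_sub_mem_Ioo hq).1
    have htp := ht.1
    rw [Real.norm_eq_abs, abs_mul, abs_mul, abs_mul, abs_of_pos ht.1]
    refine mul_le_mul_of_nonneg_right ?_ (abs_nonneg _)
    have he : Real.exp (lam * (t * q.1))
        ≤ Real.exp (lam * t)
          * (lam ^ (-1 / 4 : ℝ) * (t ^ (-1 / 4 : ℝ) * (1 - q.1) ^ (-1 / 4 : ℝ))) := by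
      rw [show lam * (t * q.1) = lam * t + -(lam * (t * (1 - q.1))) by ring, Real.exp_add,
        ← Real.mul_rpow htp.le hv.le, ← Real.mul_rpow hlam.le (by positivity)]
      exact mul_le_mul_of_nonneg_left (exp_neg_le_rpow (by positivity)) (Real.exp_pos _).le
    rw [Real.mul_rpow htp.le hv.le] at h1
    -- The powers of `t` combine to `t ^ (1/4)`, at most `1` on `(0,1]`.
    have htt : t * (t ^ (-1 / 2 : ℝ) * t ^ (-1 / 4 : ℝ)) ≤ 1 := by
      nth_rewrite 1 [← Real.rpow_one t]
      rw [← Real.rpow_add htp, ← Real.rpow_add htp]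
      exact Real.rpow_le_one htp.le ht.2 (by norm_num)
    have hvv : (1 - q.1) ^ (-1 / 2 : ℝ) * (1 - q.1) ^ (-1 / 4 : ℝ) = (1 - q.1) ^ (-3 / 4 : ℝ) := by
      rw [← Real.rpow_add hv]; norm_num
    calc t * (|heatKernel hbar (t * (1 - q.1)) (x - q.2)| * |g (t * q.1) q.2 y|)
        ≤ t * ((C * (t ^ (-1 / 2 : ℝ) * (1 - q.1) ^ (-1 / 2 : ℝ)))
            * (M * (Real.exp (lam * t)
          * (lam ^ (-1 / 4 : ℝ) * (t ^ (-1 / 4 : ℝ) * (1 - q.1) ^ (-1 / 4 : ℝ)))))) := by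
          gcongr
          exact h2.trans (mul_le_mul_of_nonneg_left he hM)
      _ = (t * (t ^ (-1 / 2 : ℝ) * t ^ (-1 / 4 : ℝ))) * (Real.exp (lam * t) * C * M
            * lam ^ (-1 / 4 : ℝ) * ((1 - q.1) ^ (-1 / 2 : ℝ) * (1 - q.1) ^ (-1 / 4 : ℝ))) := by
          ring
      _ ≤ _ := by
          rw [hvv]
          exact mul_le_of_le_one_left (by positivity) htt)
  rw [unitSq, integral_prod_mul
    (fun u : ℝ => Real.exp (lam * t) * C * M * lam ^ (-1 / 4 : ℝ) * (1 - u) ^ (-3 / 4 : ℝ))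
    (fun z => |A z|), MeasureTheory.integral_const_mul, integral_one_sub_rpow_Ioo] at h
  calc |volterra hbar A g t x y| ≤ _ := h
    _ ≤ (Real.exp (lam * t) * C * M * lam ^ (-1 / 4 : ℝ) * 4) * CA :=
        mul_le_mul_of_nonneg_left hCA (by positivity)
    _ = _ := by ring

/-- Undoing the substitution `s = t u` recovers the iterated integral of the fixed point
relation. -/
theorem volterra_eq_integral {hbar C M : ℝ} (hhbar : 0 < hbar)
    (hC : ∀ t ∈ Set.Ioc (0 : ℝ) 1, ∀ z : ℝ,
      |heatKernel hbar t z| ≤ C * t ^ (-1 / 2 : ℝ)) (hC0 : 0 < C) (hM : 0 ≤ M) {A : ℝ → ℝ}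
    (hA : IntegrableOn A (Set.Ioc 0 1))
    {g : ℝ → ℝ → ℝ → ℝ} (hg : IsSource M g) {t : ℝ} (ht : t ∈ Set.Ioc (0 : ℝ) 1) (x y : ℝ) :
    volterra hbar A g t x y = ∫ s in (0 : ℝ)..t, ∫ z in (0 : ℝ)..1,
      heatKernel hbar (t - s) (x - z) * A z * g s z y := by
  have hI := integrable_integrand hhbar hC hC0 hM hA hg ht x y
  rw [unitSq] at hI
  rw [volterra, unitSq, integral_prod _ hI, ← integral_Ioc_eq_integral_Ioo,
    ← intervalIntegral.integral_of_le zero_le_one]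
  have h := intervalIntegral.mul_integral_comp_mul_left (a := 0) (b := 1)
    (f := fun s => ∫ z in (0 : ℝ)..1, heatKernel hbar (t - s) (x - z) * A z * g s z y) t
  rw [mul_zero, mul_one] at h
  rw [← h, ← intervalIntegral.integral_const_mul]
  refine intervalIntegral.integral_congr fun u _ => ?_
  simp only
  rw [intervalIntegral.integral_of_le zero_le_one, ← MeasureTheory.integral_const_mul]
  congr 1
  ext z
  rw [show t - t * u = t * (1 - u) by ring]
  ring

open scoped BoundedContinuousFunction

theorem one_le_rpow_neg_half {s : ℝ} (hs : s ∈ Set.Ioc (0 : ℝ) 1) : 1 ≤ s ^ (-1 / 2 : ℝ) :=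
  Real.one_le_rpow_of_pos_of_le_one_of_nonpos hs.1 hs.2 (by norm_num)

theorem isSource_heatKernel {hbar C : ℝ} (hhbar : 0 < hbar)
    (hC : ∀ t ∈ Set.Ioc (0 : ℝ) 1, ∀ z : ℝ,
      |heatKernel hbar t z| ≤ C * t ^ (-1 / 2 : ℝ)) :
    IsSource C (fun s z y => heatKernel hbar s (z - y)) := by
  refine ⟨?_, fun s hs z y => hC s hs _⟩
  rintro p ⟨ht, -⟩
  have h := continuousAt_heatKernel hhbar ht.1 (p.2.1 - p.2.2)
  have hm : ContinuousAt (fun p : ℝ × ℝ × ℝ => (p.1, p.2.1 - p.2.2)) p := by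
    apply Continuous.continuousAt
    fun_prop
  exact (ContinuousAt.comp (f := fun p : ℝ × ℝ × ℝ => (p.1, p.2.1 - p.2.2)) h
    hm).continuousWithinAt

theorem IsSource.add {M M' : ℝ} {g g' : ℝ → ℝ → ℝ → ℝ} (hg : IsSource M g)
    (hg' : IsSource M' g') : IsSource (M + M') (fun s z y => g s z y + g' s z y) := by
  refine ⟨hg.1.add hg'.1, fun s hs z y => (abs_add_le _ _).trans ?_⟩
  rw [add_mul]
  exact add_le_add (hg.2 s hs z y) (hg'.2 s hs z y)

theorem volterra_sub {hbar C M M' : ℝ} (hhbar : 0 < hbar)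
    (hC : ∀ t ∈ Set.Ioc (0 : ℝ) 1, ∀ z : ℝ,
      |heatKernel hbar t z| ≤ C * t ^ (-1 / 2 : ℝ)) (hC0 : 0 < C) (hM : 0 ≤ M) (hM' : 0 ≤ M')
    {A : ℝ → ℝ} (hA : IntegrableOn A (Set.Ioc 0 1))
    {g g' : ℝ → ℝ → ℝ → ℝ} (hg : IsSource M g) (hg' : IsSource M' g')
    {t : ℝ} (ht : t ∈ Set.Ioc (0 : ℝ) 1) (x y : ℝ) :
    volterra hbar A g t x y - volterra hbar A g' t x y
      = volterra hbar A (fun s z y => g s z y - g' s z y) t x y := by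
  rw [volterra, volterra, ← MeasureTheory.integral_sub
    (integrable_integrand hhbar hC hC0 hM hA hg ht x y)
    (integrable_integrand hhbar hC hC0 hM' hA hg' ht x y), volterra]
  congr 1
  ext q
  ring

/-! ### The weighted space of bounded continuous functions -/

/-- The domain `(0,1] × ℝ × ℝ` of triples `(t, x, y)`. -/
abbrev SpaceTime : Type := Set.Ioc (0 : ℝ) 1 × ℝ × ℝ

/-- The function `exp (lam s) H^s(z, y)`, extended by zero to times outside `(0,1]`. -/
noncomputable def unweight (lam : ℝ) (H : SpaceTime →ᵇ ℝ) (s z y : ℝ) : ℝ :=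
  if hs : s ∈ Set.Ioc (0 : ℝ) 1 then Real.exp (lam * s) * H (⟨s, hs⟩, z, y) else 0

/-- The weighted function `exp (-lam t) g^t(x, y)` as an element of the Banach space of bounded
continuous functions. -/
noncomputable def weight {lam B : ℝ} (hlam : 0 ≤ lam) {g : ℝ → ℝ → ℝ → ℝ}
    (hg : ContinuousOn (fun p : ℝ × ℝ × ℝ => g p.1 p.2.1 p.2.2)
      (Set.Ioc 0 1 ×ˢ (Set.univ : Set ℝ) ×ˢ (Set.univ : Set ℝ)))
    (hB : ∀ t ∈ Set.Ioc (0 : ℝ) 1, ∀ x y : ℝ, |g t x y| ≤ B) : SpaceTime →ᵇ ℝ :=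
  BoundedContinuousFunction.ofNormedAddCommGroup
    (fun p : SpaceTime => Real.exp (-(lam * p.1)) * g p.1 p.2.1 p.2.2)
    (Continuous.mul (by fun_prop) (hg.comp_continuous
      (f := fun p : SpaceTime => ((p.1 : ℝ), p.2.1, p.2.2)) (by fun_prop)
      fun p => ⟨p.1.2, trivial, trivial⟩)) B (fun p => by
    rw [Real.norm_eq_abs, abs_mul, abs_of_pos (Real.exp_pos _)]
    refine (mul_le_of_le_one_left (abs_nonneg _) (Real.exp_le_one_iff.2 ?_)).trans
      (hB _ p.1.2 _ _)
    have := mul_nonneg hlam p.1.2.1.le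
    linarith)

theorem unweight_weight {lam B : ℝ} (hlam : 0 ≤ lam) {g : ℝ → ℝ → ℝ → ℝ}
    (hg : ContinuousOn (fun p : ℝ × ℝ × ℝ => g p.1 p.2.1 p.2.2)
      (Set.Ioc 0 1 ×ˢ (Set.univ : Set ℝ) ×ˢ (Set.univ : Set ℝ)))
    (hB : ∀ t ∈ Set.Ioc (0 : ℝ) 1, ∀ x y : ℝ, |g t x y| ≤ B)
    {s : ℝ} (hs : s ∈ Set.Ioc (0 : ℝ) 1) (z y : ℝ) :
    unweight lam (weight hlam hg hB) s z y = g s z y := by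
  rw [unweight, dif_pos hs]
  change Real.exp (lam * s) * (Real.exp (-(lam * s)) * g s z y) = g s z y
  rw [← mul_assoc, ← Real.exp_add, add_neg_cancel, Real.exp_zero, one_mul]

theorem abs_unweight_le {lam : ℝ} (hlam : 0 ≤ lam) (H : SpaceTime →ᵇ ℝ) {s : ℝ}
    (hs : s ∈ Set.Ioc (0 : ℝ) 1) (z y : ℝ) : |unweight lam H s z y| ≤ Real.exp lam * ‖H‖ := by
  rw [unweight, dif_pos hs, abs_mul, abs_of_pos (Real.exp_pos _)]
  exact mul_le_mul (Real.exp_le_exp.2 (mul_le_of_le_one_right hlam hs.2))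
    (H.norm_coe_le_norm _) (abs_nonneg _) (Real.exp_pos _).le

theorem isSource_unweight {lam : ℝ} (hlam : 0 ≤ lam) (H : SpaceTime →ᵇ ℝ) :
    IsSource (Real.exp lam * ‖H‖) (unweight lam H) := by
  refine ⟨?_, fun s hs z y => (abs_unweight_le hlam H hs z y).trans
    (le_mul_of_one_le_right (by positivity) (one_le_rpow_neg_half hs))⟩
  rw [continuousOn_iff_continuous_domRestrict]
  have hc : Continuous fun p : ↥(Set.Ioc (0 : ℝ) 1 ×ˢ (Set.univ : Set ℝ) ×ˢ (Set.univ : Set ℝ)) =>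
      Real.exp (lam * p.1.1) * H (⟨p.1.1, p.2.1⟩, p.1.2.1, p.1.2.2) :=
    Continuous.mul (by fun_prop) (H.continuous.comp (by fun_prop))
  convert hc using 2 with p
  simp only [Set.domRestrict_apply, unweight]
  exact dif_pos p.2.1

/-! ### The fixed point -/

/-- For every `C_A > 0` there is `K_G > 0` (depending only on `C_A` and `ħ`)
such that for every 1-periodic integrable `A` with `∫₀¹|A| ≤ C_A` there is exactly one bounded
continuous auxiliary kernel `G` on `(0,1] × (ℝ/ℤ)²` satisfying the fixed point relation, and it
is bounded by `K_G`. -/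
theorem aux_kernel_exists_unique (hbar : ℝ) (hhbar : 0 < hbar) :
    ∀ CA : ℝ, 0 < CA → ∃ KG : ℝ, 0 < KG ∧
      ∀ A : ℝ → ℝ, Function.Periodic A 1 → IntegrableOn A (Set.Ioc 0 1) →
        (∫ z in (0 : ℝ)..1, |A z|) ≤ CA →
        ∃ G : ℝ → ℝ → ℝ → ℝ,
          IsAuxKernel hbar A G ∧
          (∀ G' : ℝ → ℝ → ℝ → ℝ, IsAuxKernel hbar A G' →
            ∀ t ∈ Set.Ioc (0 : ℝ) 1, ∀ x y : ℝ, G' t x y = G t x y) ∧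
          (∀ t ∈ Set.Ioc (0 : ℝ) 1, ∀ x y : ℝ, |G t x y| ≤ KG) := by
  obtain ⟨C, hC0, hC⟩ := exists_heatKernel_bound hhbar
  intro CA hCA0
  -- With this rate the weighted estimate `abs_volterra_le_exp` has the constant `1 / 2`.
  set lam : ℝ := (8 * C * CA) ^ (4 : ℝ) with hlam_def
  have hlam : 0 < lam := by positivity
  have hhalf : 4 * C * CA * lam ^ (-1 / 4 : ℝ) = 1 / 2 := by
    rw [hlam_def, ← Real.rpow_mul (by positivity)]
    norm_num [Real.rpow_neg_one]
    field_simp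
    norm_num
  set β : ℝ := ∫ u in Set.Ioo (0 : ℝ) 1, (u ^ (-1 / 2 : ℝ) + (1 - u) ^ (-1 / 2 : ℝ)) with hβ_def
  have hβ : 0 ≤ β := by
    refine setIntegral_nonneg measurableSet_Ioo fun u hu => ?_
    have h1 := hu.1
    have h2 := (one_sub_mem_Ioo hu).1
    positivity
  set D : ℝ := (C * C * β) * CA with hD_def
  have hD : 0 ≤ D := by positivity
  refine ⟨Real.exp lam * (2 * D) + 1, by positivity, fun A _ hA hACA => ?_⟩
  rw [intervalIntegral.integral_of_le zero_le_one] at hACA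
  have hK := isSource_heatKernel hhbar hC
  have hsrc : ∀ H : SpaceTime →ᵇ ℝ, IsSource (Real.exp lam * ‖H‖ + C)
      (fun s z y => unweight lam H s z y + heatKernel hbar s (z - y)) :=
    fun H => (isSource_unweight hlam.le H).add hK
  have hM : ∀ H : SpaceTime →ᵇ ℝ, 0 ≤ Real.exp lam * ‖H‖ + C := fun H => by positivity
  -- The fixed point map in terms of the weighted unknown `exp (-lam t) G`.
  have hex : ∀ H : SpaceTime →ᵇ ℝ, ∃ H' : SpaceTime →ᵇ ℝ, ∀ p : SpaceTime,
      H' p = Real.exp (-(lam * p.1)) * volterra hbar A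
        (fun s z y => unweight lam H s z y + heatKernel hbar s (z - y)) p.1 p.2.1 p.2.2 := by
    intro H
    refine ⟨weight (hlam.le)
      (continuousOn_volterra hhbar hC hC0 (hM H) hA (hsrc H))
      (fun t ht x y => abs_volterra_le hC hC0 (hM H) hA hACA (hsrc H) ht x y), fun p => rfl⟩
  choose Ψ hΨ using hex
  have hdist : ∀ H H' : SpaceTime →ᵇ ℝ, dist (Ψ H) (Ψ H') ≤ 1 / 2 * dist H H' := by
    intro H H'
    refine (BoundedContinuousFunction.dist_le (by positivity)).2 fun p => ?_
    have hsub := volterra_sub hhbar hC hC0 (hM H) (hM H') hA (hsrc H) (hsrc H')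
      p.1.2 p.2.1 p.2.2
    have hle := abs_volterra_le_exp hC hC0 (dist_nonneg (x := H) (y := H')) hlam hA hACA
      (g := fun s z y => (unweight lam H s z y + heatKernel hbar s (z - y))
        - (unweight lam H' s z y + heatKernel hbar s (z - y))) (fun s hs z y => by
        rw [add_sub_add_right_eq_sub, unweight, unweight, dif_pos hs, dif_pos hs, ← mul_sub,
          abs_mul, abs_of_pos (Real.exp_pos _), mul_comm, ← Real.dist_eq]
        exact mul_le_mul_of_nonneg_right (BoundedContinuousFunction.dist_coe_le_dist _)
          (Real.exp_pos _).le) p.1.2 p.2.1 p.2.2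
    rw [Real.dist_eq, hΨ, hΨ, ← mul_sub, hsub, abs_mul, abs_of_pos (Real.exp_pos _)]
    rw [hhalf] at hle
    calc _ ≤ Real.exp (-(lam * p.1)) * (Real.exp (lam * p.1) * (1 / 2) * dist H H') :=
          mul_le_mul_of_nonneg_left hle (Real.exp_pos _).le
      _ = (Real.exp (-(lam * p.1)) * Real.exp (lam * p.1)) * (1 / 2 * dist H H') := by ring
      _ = _ := by rw [← Real.exp_add, neg_add_cancel, Real.exp_zero, one_mul]
  have hcontr : ContractingWith (1 / 2) Ψ :=
    ⟨by rw [← NNReal.coe_lt_coe]; norm_num,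
      LipschitzWith.of_dist_le_mul fun H H' => by simpa using hdist H H'⟩
  set H : SpaceTime →ᵇ ℝ := ContractingWith.fixedPoint Ψ hcontr with hH_def
  have hfix : Ψ H = H := hcontr.fixedPoint_isFixedPt
  have huniq : ∀ H' : SpaceTime →ᵇ ℝ, Ψ H' = H' → H' = H :=
    fun H' h => hcontr.fixedPoint_unique h
  have hG : ∀ t ∈ Set.Ioc (0 : ℝ) 1, ∀ x y : ℝ, unweight lam H t x y = volterra hbar A
      (fun s z y => unweight lam H s z y + heatKernel hbar s (z - y)) t x y := by
    intro t ht x y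
    have h := hΨ H (⟨t, ht⟩, x, y)
    rw [hfix] at h
    rw [unweight, dif_pos ht, h, ← mul_assoc, ← Real.exp_add, add_neg_cancel, Real.exp_zero,
      one_mul]
  -- The translate of the fixed point in `y` is again a fixed point.
  have hper : ∀ p : SpaceTime, H (p.1, p.2.1, p.2.2 + 1) = H p := by
    set τ : C(SpaceTime, SpaceTime) := ⟨fun p => (p.1, p.2.1, p.2.2 + 1), by fun_prop⟩
    have h : H.compContinuous τ = H := by
      refine huniq _ (BoundedContinuousFunction.ext fun p => ?_)
      have h1 : H.compContinuous τ p = H (p.1, p.2.1, p.2.2 + 1) := rfl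
      have h2 : ∀ s z y, unweight lam (H.compContinuous τ) s z y
          = unweight lam H s z (y + 1) := fun s z y => rfl
      have h3 : ∀ s z y : ℝ, heatKernel hbar s (z - (y + 1)) = heatKernel hbar s (z - y) :=
        fun s z y => by rw [← sub_sub, heatKernel_sub_one]
      rw [h1, ← hfix, hΨ, hΨ, hfix]
      simp only [volterra, h2, h3]
    exact fun p => congrArg (fun F : SpaceTime →ᵇ ℝ => F p) h
  refine ⟨unweight lam H, ⟨fun t x y => ⟨?_, ?_⟩, (isSource_unweight hlam.le H).1,
    ⟨Real.exp lam * ‖H‖, fun t ht x y => abs_unweight_le hlam.le H ht x y⟩, fun t ht x y => ?_⟩,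
    fun G' hG' t ht x y => ?_, fun t ht x y => ?_⟩
  · by_cases ht : t ∈ Set.Ioc (0 : ℝ) 1
    · rw [hG t ht, hG t ht]
      simp only [volterra, add_sub_right_comm, heatKernel_add_one]
    · simp only [unweight, dif_neg ht]
  · by_cases ht : t ∈ Set.Ioc (0 : ℝ) 1
    · simp only [unweight, dif_pos ht]
      rw [← hper (⟨t, ht⟩, x, y)]
    · simp only [unweight, dif_neg ht]
  · rw [hG t ht]
    exact volterra_eq_integral hhbar hC hC0 (hM H) hA (hsrc H) ht x y
  · obtain ⟨-, hcont, ⟨B, hB⟩, heq⟩ := hG'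
    set H' : SpaceTime →ᵇ ℝ := weight hlam.le hcont hB with hH'
    have hun : ∀ s ∈ Set.Ioc (0 : ℝ) 1, ∀ z y : ℝ, unweight lam H' s z y = G' s z y :=
      fun s hs z y => unweight_weight hlam.le hcont hB hs z y
    have hfix' : Ψ H' = H' := by
      refine BoundedContinuousFunction.ext fun p => ?_
      rw [hΨ, volterra_eq_integral hhbar hC hC0 (hM H') hA (hsrc H') p.1.2]
      change _ = Real.exp (-(lam * p.1)) * G' p.1 p.2.1 p.2.2
      rw [heq _ p.1.2]
      congr 1
      rw [intervalIntegral.integral_of_le p.1.2.1.le, intervalIntegral.integral_of_le p.1.2.1.le]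
      refine setIntegral_congr_fun measurableSet_Ioc fun s hs => ?_
      simp only [hun s ⟨hs.1, hs.2.trans p.1.2.2⟩]
    rw [← huniq H' hfix', hun t ht]
  · have h0 : ‖Ψ 0‖ ≤ D := by
      refine (BoundedContinuousFunction.norm_le hD).2 fun p => ?_
      have hz : (fun s z y => unweight lam 0 s z y + heatKernel hbar s (z - y))
          = fun s z y => heatKernel hbar s (z - y) := by
        ext s z y
        simp [unweight]
      rw [hΨ, hz, Real.norm_eq_abs, abs_mul, abs_of_pos (Real.exp_pos _)]
      refine (mul_le_of_le_one_left (abs_nonneg _) (Real.exp_le_one_iff.2 ?_)).trans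
        (abs_volterra_le hC hC0 hC0.le hA hACA hK p.1.2 _ _)
      have := mul_nonneg hlam.le p.1.2.1.le
      linarith
    have hH2 : ‖H‖ ≤ 2 * D := by
      have h1 := hdist H 0
      rw [hfix, dist_zero_right] at h1
      have h2 : ‖H‖ ≤ dist H (Ψ 0) + ‖Ψ 0‖ := by
        rw [dist_eq_norm]
        simpa using norm_add_le (H - Ψ 0) (Ψ 0)
      linarith
    have h3 := abs_unweight_le hlam.le H ht x y
    have h4 := mul_le_mul_of_nonneg_left hH2 (Real.exp_pos lam).le
    linarith
end

section
/- There is a universal constant C > 0 with the following property: for every 1-periodic absolutely continuous function f : ℝ → ℝ with derivative f' ∈ L²(0,1) and ∫₀¹ f(x) dx = 0, and for every 1-periodic differentiable F : ℝ → ℝ with F' = f, one has sup_x |f(x)| ≤ C·‖f'‖_{L²(0,1)}^{4/5}·‖F‖_{L²(0,1)}^{1/5}, and |f(x) − f(y)| ≤ C·‖f'‖_{L²(0,1)}^{4/5}·‖F‖_{L²(0,1)}^{1/5}·|x − y|^{1/10} for all x, y ∈ ℝ with |x − y| ≤ 1. -/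
/-!
Write `A = ‖f'‖_{L²(0,1)}` and `B = ‖F‖_{L²(0,1)}`. Three estimates carry the proof.

* Cauchy–Schwarz gives `|f b - f a|² ≤ A² |b - a|` for `|b - a| ≤ 1` (`sq_sub_le`).
* Since `F 0 = F 1`, the function `f` vanishes somewhere, so `|f| ≤ A` (`sq_le_energy`).
* `f x ^ 4 ≤ 20 A³ B` (`pow_four_le`): with `m = |f x|` and `h = m² / (4 A²) ≤ 1/4`, the first
  estimate shows `|f| ≥ m / 2` on `[x - h, x + h]`. By the mean value theorem
  `|F (x + t) - F (x - t)| ≥ m t` for `0 ≤ t ≤ h`, and squaring and integrating in `t` gives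
  `m² h³ / 3 ≤ 2 B²`, that is `m⁸ ≤ 384 A⁶ B²`.

Hence `|f x|⁵ ≤ 20 A⁴ B`, and `D = |f x - f y|` satisfies `D⁴ ≤ 320 A³ B` and `D² ≤ A² |x - y|`,
so `D¹⁰ ≤ 320² A⁸ B² |x - y|`. Taking roots gives both claims with `C = 4`, as `320 ≤ 4⁵`.
-/

open MeasureTheory intervalIntegral

/-- Cauchy–Schwarz on `[a, b]`, from `∫ (g - mean g)² ≥ 0`. -/
lemma sq_integral_le {g : ℝ → ℝ} {a b : ℝ} (hab : a ≤ b)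
    (hg : IntervalIntegrable g volume a b)
    (hg2 : IntervalIntegrable (fun x => g x ^ 2) volume a b) :
    (∫ x in a..b, g x) ^ 2 ≤ (b - a) * ∫ x in a..b, g x ^ 2 := by
  rcases hab.eq_or_lt with rfl | hlt
  · simp
  set D := ∫ x in a..b, g x with hD
  set E := ∫ x in a..b, g x ^ 2 with hE
  have hd : 0 < b - a := sub_pos.2 hlt
  have h0 : 0 ≤ ∫ x in a..b, (g x - D / (b - a)) ^ 2 :=
    integral_nonneg hab fun x _ => sq_nonneg _
  have h1 : ∫ x in a..b, (g x - D / (b - a)) ^ 2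
      = E - 2 * (D / (b - a)) * D + (b - a) * (D / (b - a)) ^ 2 := by
    have : ∀ x, (g x - D / (b - a)) ^ 2
        = (g x ^ 2 - 2 * (D / (b - a)) * g x) + (D / (b - a)) ^ 2 := fun x => by ring
    simp_rw [this]
    rw [integral_add (hg2.sub (hg.const_mul _)) (by simp), integral_sub hg2 (hg.const_mul _),
      intervalIntegral.integral_const_mul, intervalIntegral.integral_const, smul_eq_mul]
  rw [h1] at h0
  have h2 : (b - a) * (E - 2 * (D / (b - a)) * D + (b - a) * (D / (b - a)) ^ 2)
      = (b - a) * E - D ^ 2 := by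
    field_simp
    ring
  have := mul_nonneg hd.le h0
  rw [h2] at this
  linarith

/-- The integral of a nonnegative 1-periodic function over an interval of length at most one is
at most its integral over a period. -/
lemma integral_le_period {g : ℝ → ℝ} (hp : Function.Periodic g 1) (h0 : ∀ x, 0 ≤ g x)
    (hi : IntervalIntegrable g volume 0 1) {a b : ℝ} (hb : b ≤ a + 1) :
    ∫ x in a..b, g x ≤ ∫ x in (0 : ℝ)..1, g x := by
  have h1 : ∫ x in (0 : ℝ)..1, g x = ∫ x in a..(a + 1), g x := by
    have := hp.intervalIntegral_add_eq 0 a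
    simpa using this
  have hii : ∀ c d, IntervalIntegrable g volume c d := fun c d =>
    hp.intervalIntegrable₀ one_ne_zero hi c d
  rw [h1, ← integral_add_adjacent_intervals (hii a b) (hii b (a + 1))]
  have := integral_nonneg (μ := volume) hb fun x _ => h0 x
  linarith

/-- A function with square-integrable periodic derivative is `1/2`-Hölder at scales up to one. -/
lemma sq_sub_le {f f' : ℝ → ℝ} (hp' : Function.Periodic f' 1)
    (hi : IntervalIntegrable f' volume 0 1)
    (hi2 : IntervalIntegrable (fun x => f' x ^ 2) volume 0 1)
    (hf : ∀ a b : ℝ, f b - f a = ∫ x in a..b, f' x) (x y : ℝ) (hxy : |x - y| ≤ 1) :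
    (f x - f y) ^ 2 ≤ (∫ z in (0 : ℝ)..1, f' z ^ 2) * |x - y| := by
  wlog h : y ≤ x generalizing x y
  · have := this y x (by rwa [abs_sub_comm]) (le_of_not_ge h)
    rw [abs_sub_comm x y]
    linarith [sub_sq_comm (f x) (f y)]
  have hp2 : Function.Periodic (fun x => f' x ^ 2) 1 := fun x => by simp only [hp' x]
  rw [abs_of_nonneg (sub_nonneg.2 h)] at hxy ⊢
  rw [hf y x]
  refine (sq_integral_le h (hp'.intervalIntegrable₀ one_ne_zero hi _ _)
    (hp2.intervalIntegrable₀ one_ne_zero hi2 _ _)).trans ?_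
  rw [mul_comm]
  exact mul_le_mul_of_nonneg_right
    (integral_le_period hp2 (fun _ => sq_nonneg _) hi2 (by linarith)) (by linarith)

/-- A zero of `f`, given by Rolle's theorem for `F`, lies within distance one of a translate of
each point. -/
lemma sq_le_energy {f F : ℝ → ℝ} {E : ℝ} (hE : 0 ≤ E) (hp : Function.Periodic f 1)
    (hpF : Function.Periodic F 1) (hF : ∀ x : ℝ, HasDerivAt F (f x) x)
    (hf : ∀ x y : ℝ, |x - y| ≤ 1 → (f x - f y) ^ 2 ≤ E * |x - y|) (x : ℝ) :
    f x ^ 2 ≤ E := by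
  have hF01 : F 0 = F 1 := by simpa using (hpF 0).symm
  obtain ⟨z, -, hz⟩ := exists_hasDerivAt_eq_zero (f := F) (f' := f) zero_lt_one
    (fun x _ => (hF x).continuousAt.continuousWithinAt) hF01 fun x _ => hF x
  obtain ⟨y, hy, hxy⟩ := hp.exists_mem_Ico zero_lt_one x z
  have hd : |y - z| ≤ 1 := by
    rw [abs_of_nonneg (by linarith [hy.1])]
    linarith [hy.2]
  have := hf y z hd
  rw [hz, sub_zero] at this
  rw [hxy]
  nlinarith

/-- The Gagliardo–Nirenberg bound `sup |f| ≲ A^(3/4) B^(1/4)`: a large value of `f` persists on an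
interval of half-width `h`, which forces `F` to have a large increment across it. -/
lemma pow_four_le {f F : ℝ → ℝ} {A : ℝ} (hA : 0 ≤ A)
    (hpF : Function.Periodic F 1) (hF : ∀ x : ℝ, HasDerivAt F (f x) x)
    (hf : ∀ x y : ℝ, |x - y| ≤ 1 → (f x - f y) ^ 2 ≤ A ^ 2 * |x - y|)
    (hsup : ∀ x, f x ^ 2 ≤ A ^ 2) (x : ℝ) :
    f x ^ 4 ≤ 20 * A ^ 3 * Real.sqrt (∫ z in (0 : ℝ)..1, F z ^ 2) := by
  rcases hA.eq_or_lt with rfl | hA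
  · have h0 : f x = 0 := by nlinarith [hsup x, sq_nonneg (f x)]
    simp [h0]
  have hFc : Continuous F := continuous_iff_continuousAt.2 fun x => (hF x).continuousAt
  set m := |f x| with hm
  have hm0 : 0 ≤ m := abs_nonneg _
  have hm2 : m ^ 2 = f x ^ 2 := sq_abs _
  set h := m ^ 2 / (4 * A ^ 2) with hh
  have hA2 : 0 < A ^ 2 := by positivity
  have hh0 : 0 ≤ h := by positivity
  have hAh : A ^ 2 * h = m ^ 2 / 4 := by rw [hh]; field_simp
  have hh1 : h ≤ 1 / 4 := by
    rw [hh, div_le_iff₀ (by positivity)]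
    linarith [hsup x]
  have hlow : ∀ c, |c - x| ≤ h → m / 2 ≤ |f c| := by
    intro c hc
    have h1 := hf c x (by linarith)
    have h2 : (f c - f x) ^ 2 ≤ (m / 2) ^ 2 := by nlinarith
    have h3 := abs_le_of_sq_le_sq h2 (by positivity)
    have h4 : m ≤ |f c| + |f c - f x| := by
      have := abs_sub_abs_le_abs_sub (f x) (f c)
      rw [abs_sub_comm] at this
      linarith
    linarith
  have hpt : ∀ t ∈ Set.Icc 0 h, m ^ 2 * t ^ 2 ≤ 2 * (F (x + t) ^ 2 + F (x - t) ^ 2) := by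
    rintro t ⟨ht0, hth⟩
    rcases ht0.eq_or_lt with rfl | ht
    · have := sq_nonneg (F x)
      simp
      linarith
    obtain ⟨c, ⟨hc1, hc2⟩, hc⟩ := exists_hasDerivAt_eq_slope F f (a := x - t) (b := x + t)
      (by linarith) hFc.continuousOn fun x _ => hF x
    have h1 := hlow c (abs_le.2 ⟨by linarith, by linarith⟩)
    have h2 : F (x + t) - F (x - t) = f c * (2 * t) := by
      rw [hc]
      have : x + t - (x - t) = 2 * t := by ring
      rw [this]
      field_simp
    have h3 : m ^ 2 / 4 ≤ f c ^ 2 := by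
      rw [← sq_abs (f c)]
      nlinarith
    have h4 : m ^ 2 * t ^ 2 ≤ (F (x + t) - F (x - t)) ^ 2 := by
      rw [h2]
      nlinarith [mul_le_mul_of_nonneg_right h3 (sq_nonneg t)]
    nlinarith [sq_nonneg (F (x + t) + F (x - t))]
  have hG : Continuous fun z => F z ^ 2 := hFc.pow 2
  have hint : ∫ t in (0 : ℝ)..h, m ^ 2 * t ^ 2
      ≤ ∫ t in (0 : ℝ)..h, 2 * (F (x + t) ^ 2 + F (x - t) ^ 2) :=
    integral_mono_on hh0 (Continuous.intervalIntegrable (by fun_prop) _ _)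
      (Continuous.intervalIntegrable (by fun_prop) _ _) hpt
  have hl : ∫ t in (0 : ℝ)..h, m ^ 2 * t ^ 2 = m ^ 2 * (h ^ 3 / 3) := by
    rw [intervalIntegral.integral_const_mul, integral_pow]
    norm_num
  have hr : ∫ t in (0 : ℝ)..h, 2 * (F (x + t) ^ 2 + F (x - t) ^ 2)
      = 2 * ∫ z in (x - h)..(x + h), F z ^ 2 := by
    rw [intervalIntegral.integral_const_mul, intervalIntegral.integral_add
      (Continuous.intervalIntegrable (by fun_prop) _ _)
      (Continuous.intervalIntegrable (by fun_prop) _ _),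
      intervalIntegral.integral_comp_add_left (fun z => F z ^ 2) x,
      intervalIntegral.integral_comp_sub_left (fun z => F z ^ 2) x, add_comm,
      add_zero, sub_zero,
      integral_add_adjacent_intervals (hG.intervalIntegrable _ _) (hG.intervalIntegrable _ _)]
  have hper : ∫ z in (x - h)..(x + h), F z ^ 2 ≤ ∫ z in (0 : ℝ)..1, F z ^ 2 :=
    integral_le_period (g := fun z => F z ^ 2) (fun z => by simp only [hpF z])
      (fun _ => sq_nonneg _) (hG.intervalIntegrable _ _) (by linarith)
  rw [hl, hr] at hint
  set B := Real.sqrt (∫ z in (0 : ℝ)..1, F z ^ 2) with hB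
  have hB0 : 0 ≤ B := Real.sqrt_nonneg _
  have hB2 : B ^ 2 = ∫ z in (0 : ℝ)..1, F z ^ 2 :=
    Real.sq_sqrt (integral_nonneg zero_le_one fun _ _ => sq_nonneg _)
  have h1 : m ^ 2 * h ^ 3 ≤ 6 * B ^ 2 := by linarith
  have h2 : m ^ 8 ≤ 384 * A ^ 6 * B ^ 2 := by
    have h3 : m ^ 8 = 64 * A ^ 6 * (m ^ 2 * h ^ 3) := by
      have : A ^ 6 * h ^ 3 = (m ^ 2 / 4) ^ 3 := by rw [← hAh]; ring
      linear_combination (-64) * m ^ 2 * this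
    rw [h3]
    nlinarith [mul_le_mul_of_nonneg_left h1 (show 0 ≤ 64 * A ^ 6 by positivity)]
  have h4 : f x ^ 4 = m ^ 4 := by
    calc f x ^ 4 = (f x ^ 2) ^ 2 := by ring
      _ = m ^ 4 := by rw [← hm2]; ring
  rw [h4]
  refine le_of_pow_le_pow_left₀ (n := 2) two_ne_zero (by positivity) ?_
  have : 0 ≤ A ^ 6 * B ^ 2 := by positivity
  nlinarith

theorem interpolation_C_one_tenth :
    ∃ C : ℝ, 0 < C ∧
      ∀ f f' F : ℝ → ℝ,
        Function.Periodic f 1 → Function.Periodic f' 1 → Function.Periodic F 1 →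
        IntervalIntegrable f' MeasureTheory.volume 0 1 →
        IntervalIntegrable (fun x => f' x ^ 2) MeasureTheory.volume 0 1 →
        (∀ a b : ℝ, f b - f a = ∫ x in a..b, f' x) →
        (∫ x in (0 : ℝ)..1, f x) = 0 →
        (∀ x : ℝ, HasDerivAt F (f x) x) →
        (∀ x : ℝ, |f x| ≤
          C * (Real.sqrt (∫ z in (0 : ℝ)..1, f' z ^ 2)) ^ ((4 : ℝ) / 5)
            * (Real.sqrt (∫ z in (0 : ℝ)..1, F z ^ 2)) ^ ((1 : ℝ) / 5)) ∧
        (∀ x y : ℝ, |x - y| ≤ 1 →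
          |f x - f y| ≤
            C * (Real.sqrt (∫ z in (0 : ℝ)..1, f' z ^ 2)) ^ ((4 : ℝ) / 5)
              * (Real.sqrt (∫ z in (0 : ℝ)..1, F z ^ 2)) ^ ((1 : ℝ) / 5)
              * |x - y| ^ ((1 : ℝ) / 10)) := by
  refine ⟨4, by norm_num, ?_⟩
  intro f f' F hp hp' hpF hi hi2 hf _ hF
  have hA2 : Real.sqrt (∫ z in (0 : ℝ)..1, f' z ^ 2) ^ 2 = ∫ z in (0 : ℝ)..1, f' z ^ 2 :=
    Real.sq_sqrt (integral_nonneg zero_le_one fun _ _ => sq_nonneg _)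
  have hcs := sq_sub_le hp' hi hi2 hf
  rw [← hA2] at hcs
  set A := Real.sqrt (∫ z in (0 : ℝ)..1, f' z ^ 2)
  have hA : 0 ≤ A := Real.sqrt_nonneg _
  have hsup := sq_le_energy (sq_nonneg A) hp hpF hF hcs
  have h4 := pow_four_le hA hpF hF hcs hsup
  set B := Real.sqrt (∫ z in (0 : ℝ)..1, F z ^ 2)
  have hB : 0 ≤ B := Real.sqrt_nonneg _
  -- Raising the right-hand sides to the tenth power removes all real exponents.
  have hApow : (A ^ ((4 : ℝ) / 5)) ^ 10 = A ^ 8 := by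
    rw [← Real.rpow_natCast, ← Real.rpow_mul hA, ← Real.rpow_natCast]
    norm_num
  have hBpow : (B ^ ((1 : ℝ) / 5)) ^ 10 = B ^ 2 := by
    rw [← Real.rpow_natCast, ← Real.rpow_mul hB, ← Real.rpow_natCast]
    norm_num
  have key : ∀ D d : ℝ, D ^ 4 ≤ 320 * A ^ 3 * B → D ^ 2 ≤ A ^ 2 * d →
      D ^ 10 ≤ 4 ^ 10 * A ^ 8 * B ^ 2 * d := by
    intro D d h1 h2
    have h3 : (D ^ 4) ^ 2 ≤ (320 * A ^ 3 * B) ^ 2 := pow_le_pow_left₀ (by positivity) h1 2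
    have h5 : (D ^ 4) ^ 2 * D ^ 2 ≤ (320 * A ^ 3 * B) ^ 2 * (A ^ 2 * d) :=
      mul_le_mul h3 h2 (sq_nonneg _) (sq_nonneg _)
    have h6 : 0 ≤ (A ^ 3 * B) ^ 2 * (A ^ 2 * d) :=
      mul_nonneg (sq_nonneg _) ((sq_nonneg D).trans h2)
    nlinarith
  have hAB : 0 ≤ A ^ 3 * B := by positivity
  constructor
  · intro x
    refine le_of_pow_le_pow_left₀ (n := 10) (by norm_num) (by positivity) ?_
    rw [mul_pow, mul_pow, hApow, hBpow, Even.pow_abs (by decide)]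
    have := key (f x) 1 (by linarith [h4 x]) (by linarith [hsup x])
    linarith
  · intro x y hxy
    refine le_of_pow_le_pow_left₀ (n := 10) (by norm_num) (by positivity) ?_
    have hdpow : (|x - y| ^ ((1 : ℝ) / 10)) ^ 10 = |x - y| := by
      rw [← Real.rpow_natCast, ← Real.rpow_mul (abs_nonneg _)]
      norm_num
    rw [mul_pow, mul_pow, mul_pow, hApow, hBpow, hdpow, Even.pow_abs (by decide)]
    refine key _ _ ?_ (hcs x y hxy)
    have h5 : (f x - f y) ^ 4 ≤ 8 * (f x ^ 4 + f y ^ 4) := by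
      have e1 : (f x - f y) ^ 2 ≤ 2 * (f x ^ 2 + f y ^ 2) := by
        nlinarith [sq_nonneg (f x + f y)]
      have e2 := pow_le_pow_left₀ (sq_nonneg _) e1 2
      nlinarith [sq_nonneg (f x ^ 2 - f y ^ 2)]
    linarith [h4 x, h4 y]
end
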